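/- arXiv:2401.09926 — 2 statements merged into one kernel-verified Lean document; each statement's English description precedes it below -/
import Mathlib

section
/- (Interior consistency of the scheme.) Let N ≥ 1, σ ∈ (0,2), T > 0, and let F satisfy assumption (A1). Let f : ℝ^N × [0,T] → ℝ be bounded and continuous, and let φ : ℝ^N × [0,T] → ℝ be bounded and twice continuously differentiable with bounded first and second spatial derivatives and continuous time derivative ∂_tφ. Let τ : (0,∞) → (0,∞) and η : (0,∞) → [0,∞) satisfy τ(h) → 0 and η(h)/τ(h) → 0 as h → 0⁺. For t ∈ [τ(h), T] define S(h,x,t,r,u) = (r − u(x, t−τ(h)))/τ(h) − F( ∑_{j∈ℤ^N\{0}} (u(x+hj, t−τ(h)) − u(x, t−τ(h))) κ_{σ,h,j} ) − f(x, t−τ(h)). Then for every (x₀, t₀) with t₀ ∈ (0,T) and all sequences h_m → 0⁺, x_m → x₀, t_m → t₀, ξ_m → 0 (with t_m ≥ τ(h_m), which holds for all large m), S(h_m, x_m, t_m, φ(x_m,t_m) + ξ_m + η(h_m), φ + ξ_m) → ∂_tφ(x₀,t₀) − F( (-(-Δ)^{σ/2} φ(·,t₀))(x₀) ) − f(x₀,t₀).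 -/
/-!
The weights of the scheme are built from the heat kernel `G` of the lattice `ℤ^N`, and the proof
uses its probabilistic meaning: `G N j t` is the probability that the simple random walk in
continuous time (independent coordinates, each a difference of two Poisson variables) is at `j` at
time `t` (`walk_real_singleton`). Exchanging sum and integral and substituting `s = h² t`, the
nonlocal term of the scheme becomes (`nonlocal_sum_eq`)

  `|Γ(-σ/2)|⁻¹ ∫_0^∞ (E ψ(x + h X_{s/h²}) - ψ(x)) s^{-1-σ/2} ds`,

which is the formula for the fractional Laplacian with the rescaled walk `h X_{s/h²}` in place of
Brownian motion.

For fixed `s` the rescaled walk converges weakly to the Gaussian law of variance `2 s` per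
coordinate, by its explicit characteristic function and Lévy's theorem; this also holds along
moving base points (`tendsto_integral_walk`), and the limit is the heat semigroup (`heatSG_eq`).
The integrands are dominated uniformly in `h`: the walk is centred with second moment `2 N t`, so
a second-order Taylor expansion gives `|E ψ(x + h X_{s/h²}) - ψ(x)| ≤ 2 N ‖D²ψ‖ s`
(`walk_increment_bound`), and boundedness of `ψ` handles large `s`. Dominated convergence then
gives the convergence of the nonlocal term (`tendsto_nonlocal_sum`).

The time difference quotient is handled by the mean value theorem and the continuity of the time
derivative (`tendsto_time_quotient`), and the term `η(h) / τ(h)` vanishes in the limit. Finally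
`F` is continuous, since the one-sided bound makes it Lipschitz.
-/

open MeasureTheory Real Set Filter

/-- Modified Bessel function of the first kind of integer order `m`. -/
noncomputable def besselI (m : ℕ) (s : ℝ) : ℝ :=
  ∑' k : ℕ, (s / 2) ^ (2 * k + m) / ((Nat.factorial k : ℝ) * (Nat.factorial (k + m)))

/-- `G(j,t) = e^{-2Nt} ∏_i I_{|j_i|}(2t)`. -/
noncomputable def G (N : ℕ) (j : Fin N → ℤ) (t : ℝ) : ℝ :=
  Real.exp (-(2 * (N : ℝ)) * t) * ∏ i, besselI (j i).natAbs (2 * t)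

/-- The weight `κ_{σ,h,j} = h^{-σ} |Γ(-σ/2)|⁻¹ ∫_0^∞ G(j,t) t^{-1-σ/2} dt`. -/
noncomputable def kappa (N : ℕ) (σ h : ℝ) (j : Fin N → ℤ) : ℝ :=
  h ^ (-σ) * |Real.Gamma (-σ / 2)|⁻¹ * ∫ t in Set.Ioi (0 : ℝ), G N j t * t ^ (-1 - σ / 2)

/-- The shifted grid point `x + h j`. -/
noncomputable def shift (N : ℕ) (h : ℝ) (x : Fin N → ℝ) (j : Fin N → ℤ) : Fin N → ℝ :=
  fun i => x i + h * (j i : ℝ)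

/-- The Gaussian heat kernel `K_N(y,t) = (4πt)^{-N/2} e^{-|y|²/(4t)}`. -/
noncomputable def heatKernel (N : ℕ) (y : Fin N → ℝ) (t : ℝ) : ℝ :=
  (4 * Real.pi * t) ^ (-(N : ℝ) / 2) * Real.exp (-(∑ i, (y i) ^ 2) / (4 * t))

/-- The heat semigroup `(e^{tΔ}φ)(x) = ∫ φ(x−y) K_N(y,t) dy`. -/
noncomputable def heatSG (N : ℕ) (φ : (Fin N → ℝ) → ℝ) (t : ℝ) (x : Fin N → ℝ) : ℝ :=
  ∫ y : Fin N → ℝ, φ (x - y) * heatKernel N y t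

/-- The fractional Laplacian
`(-(-Δ)^{σ/2}φ)(x) = |Γ(-σ/2)|⁻¹ ∫_0^∞ ((e^{tΔ}φ)(x) − φ(x)) t^{-1-σ/2} dt`. -/
noncomputable def fracLap (N : ℕ) (σ : ℝ) (φ : (Fin N → ℝ) → ℝ) (x : Fin N → ℝ) : ℝ :=
  |Real.Gamma (-σ / 2)|⁻¹ * ∫ t in Set.Ioi (0 : ℝ), (heatSG N φ t x - φ x) * t ^ (-1 - σ / 2)

section Aux

open scoped NNReal ENNReal Topology
open ProbabilityTheory

/-! ### The Skellam law: point masses, moments, characteristic function -/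

/-- The Skellam law of parameter `r`: the law of the difference of two independent Poisson
variables of mean `r`, i.e. the simple random walk on `ℤ` in continuous time, started at `0` and
jumping to each neighbour at rate `1`, observed at time `r`. -/
noncomputable def skellam (r : ℝ≥0) : Measure ℤ :=
  ((poissonMeasure r).prod (poissonMeasure r)).map (fun p => (p.1 : ℤ) - (p.2 : ℤ))

instance (r : ℝ≥0) : IsProbabilityMeasure (skellam r) :=
  Measure.isProbabilityMeasure_map .of_discrete

/-- A pair of naturals with difference `k` is `(n + k⁺, n + k⁻)`, where `n` is its minimum. -/
lemma skellam_fiber (k : ℤ) :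
    (fun p : ℕ × ℕ => (p.1 : ℤ) - (p.2 : ℤ)) ⁻¹' {k} =
      ⋃ n : ℕ, {(n + k.toNat, n + (-k).toNat)} := by
  ext ⟨a, b⟩
  simp only [Set.mem_preimage, Set.mem_singleton_iff, Set.mem_iUnion, Prod.mk.injEq]
  constructor
  · intro h
    exact ⟨min a b, by omega, by omega⟩
  · rintro ⟨n, h1, h2⟩
    omega

/-- The point masses of the Skellam law are `e^{-2r} I_{|k|}(2r)`: summing the product Poisson
masses over the fiber of `k` gives the Bessel series. -/
lemma skellam_real_singleton (r : ℝ≥0) (k : ℤ) :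
    (skellam r).real {k} = Real.exp (-(2 * (r : ℝ))) * besselI k.natAbs (2 * r) := by
  have h1 : (skellam r) {k} = ∑' n : ℕ, ENNReal.ofReal
      (Real.exp (-(2 * (r : ℝ))) * ((2 * r / 2) ^ (2 * n + k.natAbs) /
        ((Nat.factorial n : ℝ) * (Nat.factorial (n + k.natAbs))))) := by
    rw [skellam, Measure.map_apply .of_discrete (measurableSet_singleton k), skellam_fiber,
      measure_iUnion]
    · refine tsum_congr fun n => ?_
      rw [← Set.singleton_prod_singleton, Measure.prod_prod, poissonMeasure_singleton,
        poissonMeasure_singleton, ← ENNReal.ofReal_mul (by positivity)]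
      congr 1
      have he : Real.exp (-(2 * (r : ℝ))) = Real.exp (-r) * Real.exp (-r) := by
        rw [← Real.exp_add]; congr 1; ring
      rw [he, mul_div_cancel_left₀ (r : ℝ) (by norm_num : (2 : ℝ) ≠ 0)]
      rcases le_total 0 k with hk | hk
      · obtain ⟨e1, e2⟩ : k.toNat = k.natAbs ∧ (-k).toNat = 0 := by omega
        rw [e1, e2]
        simp only [add_zero]
        field_simp
        ring
      · obtain ⟨e1, e2⟩ : (-k).toNat = k.natAbs ∧ k.toNat = 0 := by omega
        rw [e1, e2]
        simp only [add_zero]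
        field_simp
        ring
    · intro m n hmn
      simp only [Function.onFun, Set.disjoint_singleton, ne_eq, Prod.mk.injEq]
      omega
    · exact fun n => measurableSet_singleton _
  rw [measureReal_def, h1, ENNReal.tsum_toReal_eq (fun n => ENNReal.ofReal_ne_top), besselI,
    ← tsum_mul_left]
  refine tsum_congr fun n => ?_
  rw [ENNReal.toReal_ofReal (by positivity)]

lemma integrable_cast_poisson (r : ℝ≥0) :
    Integrable (fun n : ℕ => (n : ℝ)) (poissonMeasure r) := by
  rw [integrable_poissonMeasure_iff]
  rw [← summable_nat_add_iff 1]
  refine ((hasSum_one_poissonMeasure r).summable.mul_left (r : ℝ)).congr fun n => ?_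
  rw [Nat.factorial_succ]
  push_cast
  rw [Real.norm_of_nonneg (by positivity)]
  field_simp
  ring

/-- The second factorial moment `E[n (n - 1)] = r²` of the Poisson law. -/
lemma hasSum_factorial_moment (r : ℝ≥0) :
    HasSum (fun n : ℕ => Real.exp (-r) * (r : ℝ) ^ n / Nat.factorial n * ((n : ℝ) * (n - 1)))
      ((r : ℝ) ^ 2) := by
  rw [← hasSum_nat_add_iff' 2]
  have := (hasSum_one_poissonMeasure r).mul_left ((r : ℝ) ^ 2)
  simp only [Finset.sum_range_succ, Finset.sum_range_zero]
  norm_num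
  rw [mul_one] at this
  refine this.congr_fun fun n => ?_
  rw [show n + 2 = (n + 1) + 1 from rfl, Nat.factorial_succ, Nat.factorial_succ]
  push_cast
  field_simp
  ring

lemma integrable_sq_poisson (r : ℝ≥0) :
    Integrable (fun n : ℕ => (n : ℝ) ^ 2) (poissonMeasure r) := by
  have h1 := integrable_poissonMeasure_iff.1 (integrable_cast_poisson r)
  rw [integrable_poissonMeasure_iff]
  refine ((hasSum_factorial_moment r).summable.add h1).congr fun n => ?_
  rw [Real.norm_of_nonneg (by positivity), Real.norm_of_nonneg (by positivity)]
  ring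

lemma integral_cast_poisson (r : ℝ≥0) :
    ∫ n : ℕ, (n : ℝ) ∂(poissonMeasure r) = r := by
  refine (hasSum_integral_poissonMeasure (integrable_cast_poisson r)).unique ?_
  rw [← hasSum_nat_add_iff' 1]
  have := (hasSum_one_poissonMeasure r).mul_left (r : ℝ)
  simp only [Finset.sum_range_succ, Finset.sum_range_zero]
  norm_num
  rw [mul_one] at this
  refine this.congr_fun fun n => ?_
  rw [Nat.factorial_succ]
  push_cast
  field_simp
  ring

lemma integral_sq_poisson (r : ℝ≥0) :
    ∫ n : ℕ, (n : ℝ) ^ 2 ∂(poissonMeasure r) = (r : ℝ) ^ 2 + r := by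
  refine (hasSum_integral_poissonMeasure (integrable_sq_poisson r)).unique ?_
  have h1 := hasSum_integral_poissonMeasure (integrable_cast_poisson r)
  rw [integral_cast_poisson] at h1
  refine ((hasSum_factorial_moment r).add h1).congr_fun fun n => ?_
  simp only [smul_eq_mul]
  ring

lemma integrable_cast_skellam (r : ℝ≥0) :
    Integrable (fun k : ℤ => (k : ℝ)) (skellam r) := by
  rw [skellam, integrable_map_measure .of_discrete .of_discrete]
  refine (((integrable_cast_poisson r).comp_fst (poissonMeasure r)).sub
    ((integrable_cast_poisson r).comp_snd (poissonMeasure r))).congr (ae_of_all _ fun p => ?_)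
  simp

lemma integral_cast_skellam (r : ℝ≥0) : ∫ k : ℤ, (k : ℝ) ∂(skellam r) = 0 := by
  rw [skellam, integral_map .of_discrete .of_discrete]
  simp only [Int.cast_sub, Int.cast_natCast]
  rw [integral_sub ((integrable_cast_poisson r).comp_fst _)
    ((integrable_cast_poisson r).comp_snd _), integral_fun_fst, integral_fun_snd]
  simp

lemma integrable_sq_skellam (r : ℝ≥0) :
    Integrable (fun k : ℤ => (k : ℝ) ^ 2) (skellam r) := by
  rw [skellam, integrable_map_measure .of_discrete .of_discrete]
  refine ((((integrable_sq_poisson r).comp_fst (poissonMeasure r)).add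
    ((integrable_sq_poisson r).comp_snd (poissonMeasure r))).sub
    (((integrable_cast_poisson r).mul_prod
      (integrable_cast_poisson r)).const_mul 2)).congr (ae_of_all _ fun p => ?_)
  simp only [Pi.sub_apply, Pi.add_apply, Function.comp_apply, Int.cast_sub, Int.cast_natCast]
  ring

lemma integral_sq_skellam (r : ℝ≥0) : ∫ k : ℤ, (k : ℝ) ^ 2 ∂(skellam r) = 2 * r := by
  rw [skellam, integral_map .of_discrete .of_discrete]
  have h : ∀ p : ℕ × ℕ, (((p.1 : ℤ) - (p.2 : ℤ) : ℤ) : ℝ) ^ 2 =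
      (p.1 : ℝ) ^ 2 + (p.2 : ℝ) ^ 2 - 2 * ((p.1 : ℝ) * (p.2 : ℝ)) := fun p => by
    push_cast; ring
  simp_rw [h]
  have i1 : Integrable (fun p : ℕ × ℕ => (p.1 : ℝ) ^ 2 + (p.2 : ℝ) ^ 2)
      ((poissonMeasure r).prod (poissonMeasure r)) :=
    ((integrable_sq_poisson r).comp_fst _).add ((integrable_sq_poisson r).comp_snd _)
  rw [integral_sub i1 (((integrable_cast_poisson r).mul_prod (integrable_cast_poisson r)).const_mul 2),
    integral_add ((integrable_sq_poisson r).comp_fst _) ((integrable_sq_poisson r).comp_snd _),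
    integral_const_mul, integral_fun_fst (fun n : ℕ => (n : ℝ) ^ 2),
    integral_fun_snd (fun n : ℕ => (n : ℝ) ^ 2),
    integral_prod_mul (fun n : ℕ => (n : ℝ)) (fun n : ℕ => (n : ℝ)),
    integral_sq_poisson, integral_cast_poisson]
  simp
  ring

/-- The characteristic function of `h` times a Skellam variable is `exp (-2 r (1 - cos (h u)))`,
the product of two Poisson characteristic functions. -/
lemma charFun_skellam (r : ℝ≥0) (h u : ℝ) :
    charFun ((skellam r).map (fun k : ℤ => h * (k : ℝ))) u =
      Complex.exp ((-(2 * r * (1 - Real.cos (h * u))) : ℝ)) := by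
  have key : ∀ v : ℝ, ∫ n : ℕ, Complex.exp (((n : ℝ) * v : ℝ) * Complex.I) ∂(poissonMeasure r) =
      Complex.exp (r * (Complex.exp (v * Complex.I) - 1)) := fun v => by
    rw [← charFun_map_cast_poissonMeasure, charFun_apply_real,
      integral_map .of_discrete (by fun_prop)]
    push_cast
    simp_rw [mul_comm (v : ℂ)]
  rw [charFun_apply_real, integral_map .of_discrete (by fun_prop), skellam,
    integral_map .of_discrete .of_discrete]
  have h2 : ∀ p : ℕ × ℕ, Complex.exp (u * ((h * (((p.1 : ℤ) - (p.2 : ℤ) : ℤ) : ℝ) : ℝ) : ℂ) * Complex.I) =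
      Complex.exp (((p.1 : ℝ) * (h * u) : ℝ) * Complex.I) *
        Complex.exp (((p.2 : ℝ) * (-(h * u)) : ℝ) * Complex.I) := fun p => by
    rw [← Complex.exp_add]; congr 1; push_cast; ring
  simp_rw [h2]
  rw [integral_prod_mul (fun n : ℕ => Complex.exp (((n : ℝ) * (h * u) : ℝ) * Complex.I))
    (fun n : ℕ => Complex.exp (((n : ℝ) * (-(h * u)) : ℝ) * Complex.I)), key, key,
    ← Complex.exp_add]
  congr 1
  push_cast
  rw [Complex.cos]
  ring

/-! ### The random walk on the lattice -/

/-- The law at time `t` of the simple random walk on `ℤ^N` in continuous time, started at `0`: its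
coordinates are independent Skellam walks. Only `t ≥ 0` is meaningful; for `t < 0` it is the
Dirac mass at `0`. -/
noncomputable def walk (N : ℕ) (t : ℝ) : Measure (Fin N → ℤ) :=
  Measure.pi fun _ => skellam t.toNNReal

instance (N : ℕ) (t : ℝ) : IsProbabilityMeasure (walk N t) := by
  unfold walk; infer_instance

/-- The heat kernel `G` of the lattice gives the point masses of the random walk. -/
lemma walk_real_singleton (N : ℕ) (j : Fin N → ℤ) {t : ℝ} (ht : 0 ≤ t) :
    (walk N t).real {j} = G N j t := by
  have h : (walk N t).real {j} = ∏ i, (skellam t.toNNReal).real {j i} := by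
    simp only [measureReal_def, walk, Measure.pi_singleton, ENNReal.toReal_prod]
  rw [h, G]
  simp_rw [skellam_real_singleton, Real.coe_toNNReal t ht]
  rw [Finset.prod_mul_distrib, Finset.prod_const, ← Real.exp_nat_mul]
  simp only [Finset.card_univ, Fintype.card_fin]
  congr 2
  ring

lemma G_nonneg (N : ℕ) (j : Fin N → ℤ) {t : ℝ} (ht : 0 ≤ t) : 0 ≤ G N j t := by
  rw [← walk_real_singleton N j ht]; exact measureReal_nonneg

@[fun_prop]
lemma measurable_besselI (m : ℕ) : Measurable (besselI m) := by
  unfold besselI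
  exact Measurable.tsum fun k => by fun_prop

@[fun_prop]
lemma measurable_G (N : ℕ) (j : Fin N → ℤ) : Measurable (G N j) := by
  unfold G
  fun_prop

lemma integrable_coord (N : ℕ) (t : ℝ) (i : Fin N) :
    Integrable (fun j : Fin N → ℤ => (j i : ℝ)) (walk N t) :=
  integrable_comp_eval (μ := fun _ : Fin N => skellam t.toNNReal) (f := fun k : ℤ => (k : ℝ))
    (integrable_cast_skellam _)

lemma integral_coord (N : ℕ) (t : ℝ) (i : Fin N) :
    ∫ j : Fin N → ℤ, (j i : ℝ) ∂(walk N t) = 0 :=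
  (integral_comp_eval (μ := fun _ : Fin N => skellam t.toNNReal) (f := fun k : ℤ => (k : ℝ))
    .of_discrete).trans (integral_cast_skellam _)

lemma integrable_coord_sq (N : ℕ) (t : ℝ) (i : Fin N) :
    Integrable (fun j : Fin N → ℤ => (j i : ℝ) ^ 2) (walk N t) :=
  integrable_comp_eval (μ := fun _ : Fin N => skellam t.toNNReal) (f := fun k : ℤ => (k : ℝ) ^ 2)
    (integrable_sq_skellam _)

lemma integral_coord_sq (N : ℕ) {t : ℝ} (ht : 0 ≤ t) (i : Fin N) :
    ∫ j : Fin N → ℤ, (j i : ℝ) ^ 2 ∂(walk N t) = 2 * t := by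
  refine (integral_comp_eval (μ := fun _ : Fin N => skellam t.toNNReal)
    (f := fun k : ℤ => (k : ℝ) ^ 2) .of_discrete).trans ?_
  rw [integral_sq_skellam, Real.coe_toNNReal t ht]

/-! ### Diffusive limit of the walk -/

/-- The law of `h k` for `k` a Skellam variable of parameter `r`. -/
noncomputable def scaledSkellam (h : ℝ) (r : ℝ≥0) : ProbabilityMeasure ℝ :=
  ⟨(skellam r).map (fun k : ℤ => h * (k : ℝ)), Measure.isProbabilityMeasure_map .of_discrete⟩

/-- Under diffusive scaling, the walk in one dimension converges weakly to the Gaussian law of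
variance `2 s`, by Lévy's continuity theorem. -/
lemma tendsto_scaledSkellam {hm : ℕ → ℝ} (hhm : ∀ m, 0 < hm m) (hhm0 : Tendsto hm atTop (𝓝 0))
    {s : ℝ} (hs : 0 < s) :
    Tendsto (fun m => scaledSkellam (hm m) (s / hm m ^ 2).toNNReal) atTop
      (𝓝 (⟨gaussianReal 0 (2 * s).toNNReal, inferInstance⟩ : ProbabilityMeasure ℝ)) := by
  apply ProbabilityMeasure.tendsto_of_tendsto_charFun
  intro u
  have e1 : charFun (gaussianReal 0 (2 * s).toNNReal) u = Complex.exp ((-(s * u ^ 2) : ℝ)) := by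
    rw [charFun_gaussianReal, Real.coe_toNNReal _ (by positivity)]
    congr 1; push_cast; ring
  have e2 : ∀ m, charFun (scaledSkellam (hm m) (s / hm m ^ 2).toNNReal : Measure ℝ) u =
      Complex.exp ((-(s * u ^ 2 * Real.sinc (hm m * u / 2) ^ 2) : ℝ)) := fun m => by
    have hp := hhm m
    have hsin : Real.sin (hm m * u / 2) = (hm m * u / 2) * Real.sinc (hm m * u / 2) := by
      by_cases h0 : hm m * u / 2 = 0
      · simp [h0]
      · rw [Real.sinc_of_ne_zero h0, mul_div_cancel₀ _ h0]
    refine (charFun_skellam _ _ _).trans ?_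
    rw [Real.coe_toNNReal _ (by positivity)]
    congr 3
    have hc : 1 - Real.cos (hm m * u) = 2 * Real.sin (hm m * u / 2) ^ 2 := by
      rw [show hm m * u = 2 * (hm m * u / 2) by ring, Real.cos_two_mul, Real.cos_sq']; ring_nf
    rw [hc, hsin]
    field_simp
  simp_rw [e2]
  change Tendsto _ _ (𝓝 (charFun (gaussianReal 0 (2 * s).toNNReal) u))
  rw [e1]
  refine (Complex.continuous_exp.comp Complex.continuous_ofReal).continuousAt.tendsto.comp ?_
  have h1 : Tendsto (fun m => Real.sinc (hm m * u / 2)) atTop (𝓝 1) := by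
    have : Tendsto (fun m => hm m * u / 2) atTop (𝓝 0) := by
      simpa using (hhm0.mul_const u).div_const 2
    simpa [Function.comp_def] using (Real.continuous_sinc.tendsto 0).comp this
  simpa using ((h1.pow 2).const_mul (s * u ^ 2)).neg

/-- The invariance principle at a fixed time `s`, along moving base points `(x_m, t_m)`. The base
point is carried as a Dirac factor of a product measure, which turns the dependence of the
integrand on `m` into a dependence of the measure, so that weak convergence applies. -/
lemma tendsto_integral_walk {N : ℕ} {Φ : (Fin N → ℝ) × ℝ → ℝ} (hΦ : Continuous Φ)
    {C : ℝ} (hC : ∀ p, |Φ p| ≤ C)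
    {hm : ℕ → ℝ} (hhm : ∀ m, 0 < hm m) (hhm0 : Tendsto hm atTop (𝓝 0))
    {xm : ℕ → Fin N → ℝ} {x₀ : Fin N → ℝ} (hxm : Tendsto xm atTop (𝓝 x₀))
    {tm : ℕ → ℝ} {t₀ : ℝ} (htm : Tendsto tm atTop (𝓝 t₀)) {s : ℝ} (hs : 0 < s) :
    Tendsto (fun m => ∫ j, Φ (shift N (hm m) (xm m) j, tm m) ∂(walk N (s / hm m ^ 2))) atTop
      (𝓝 (∫ y, Φ (x₀ + y, t₀) ∂(Measure.pi fun _ : Fin N => gaussianReal 0 (2 * s).toNNReal))) := by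
  have h1 : Tendsto (fun m => (diracProba (xm m, tm m)).prod
      (ProbabilityMeasure.pi fun _ : Fin N => scaledSkellam (hm m) (s / hm m ^ 2).toNNReal)) atTop
      (𝓝 ((diracProba (x₀, t₀)).prod (ProbabilityMeasure.pi fun _ : Fin N =>
        (⟨gaussianReal 0 (2 * s).toNNReal, inferInstance⟩ : ProbabilityMeasure ℝ)))) := by
    refine (ProbabilityMeasure.continuous_prod.tendsto (_, _)).comp (Tendsto.prodMk_nhds ?_ ?_)
    · exact (continuous_diracProba.tendsto _).comp (hxm.prodMk_nhds htm)
    · exact (ProbabilityMeasure.continuous_pi.tendsto _).comp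
        (tendsto_pi_nhds.2 fun _ => tendsto_scaledSkellam hhm hhm0 hs)
  rw [ProbabilityMeasure.tendsto_iff_forall_integral_tendsto] at h1
  have hg : Continuous fun p : ((Fin N → ℝ) × ℝ) × (Fin N → ℝ) => Φ (p.1.1 + p.2, p.1.2) := by
    fun_prop
  have h2 := h1 (BoundedContinuousFunction.ofNormedAddCommGroup _ hg C fun p => hC _)
  simp only [ProbabilityMeasure.toMeasure_prod, ProbabilityMeasure.toMeasure_pi,
    BoundedContinuousFunction.coe_ofNormedAddCommGroup] at h2
  have e : ∀ (z : (Fin N → ℝ) × ℝ) (ν : Measure (Fin N → ℝ)) [IsProbabilityMeasure ν],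
      ∫ p, Φ (p.1.1 + p.2, p.1.2) ∂((diracProba z : Measure ((Fin N → ℝ) × ℝ)).prod ν) =
        ∫ y, Φ (z.1 + y, z.2) ∂ν := fun z ν _ => by
    change ∫ p, Φ (p.1.1 + p.2, p.1.2) ∂((Measure.dirac z).prod ν) = _
    rw [Measure.dirac_prod, integral_map (by fun_prop) (hg.aestronglyMeasurable)]
  rw [e] at h2
  simp_rw [e] at h2
  refine h2.congr fun m => ?_
  have e3 : (Measure.pi fun _ : Fin N =>
      ((scaledSkellam (hm m) (s / hm m ^ 2).toNNReal : ProbabilityMeasure ℝ) : Measure ℝ)) =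
      (walk N (s / hm m ^ 2)).map (fun (j : Fin N → ℤ) i => hm m * (j i : ℝ)) := by
    have : ∀ _ : Fin N, SigmaFinite ((skellam (s / hm m ^ 2).toNNReal).map
        (fun k : ℤ => hm m * (k : ℝ))) := fun _ => by
      have := (scaledSkellam (hm m) (s / hm m ^ 2).toNNReal).2
      unfold scaledSkellam at this
      infer_instance
    exact (Measure.pi_map_pi (μ := fun _ : Fin N => skellam (s / hm m ^ 2).toNNReal)
      (f := fun _ (k : ℤ) => hm m * (k : ℝ)) (fun _ => .of_discrete)).symm
  rw [e3, integral_map .of_discrete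
    (by have : Continuous fun y => Φ (xm m + y, tm m) := by fun_prop
        exact this.aestronglyMeasurable)]
  rfl

lemma pi_gaussian_eq_withDensity (N : ℕ) {v : ℝ≥0} (hv : v ≠ 0) :
    (Measure.pi fun _ : Fin N => gaussianReal 0 v) =
      (volume : Measure (Fin N → ℝ)).withDensity
        (fun y => ENNReal.ofReal (∏ i, gaussianPDFReal 0 v (y i))) := by
  refine Measure.pi_eq fun S hS => ?_
  rw [withDensity_apply _ (MeasurableSet.univ_pi hS), volume_pi, Measure.restrict_pi_pi,
    ← ofReal_integral_eq_lintegral_ofReal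
      (Integrable.fintype_prod fun i => (integrable_gaussianPDFReal 0 v).restrict)
      (ae_of_all _ fun y => Finset.prod_nonneg fun i _ => gaussianPDFReal_nonneg _ _ _),
    integral_fintype_prod_eq_prod (fun _ : Fin N => gaussianPDFReal 0 v), ENNReal.ofReal_prod_of_nonneg
      (fun i _ => integral_nonneg fun y => gaussianPDFReal_nonneg _ _ _)]
  refine Finset.prod_congr rfl fun i _ => ?_
  rw [gaussianReal_apply_eq_integral _ hv]

/-- The heat semigroup is the expectation under the Gaussian law of variance `2 s` per coordinate. -/
lemma heatSG_eq {N : ℕ} (ψ : (Fin N → ℝ) → ℝ) {s : ℝ} (hs : 0 < s) (x : Fin N → ℝ) :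
    heatSG N ψ s x =
      ∫ y, ψ (x + y) ∂(Measure.pi fun _ : Fin N => gaussianReal 0 (2 * s).toNNReal) := by
  have hv : (2 * s).toNNReal ≠ 0 := by simpa using hs
  rw [pi_gaussian_eq_withDensity N hv, integral_withDensity_eq_integral_toReal_smul
    (by fun_prop) (by simp), heatSG, ← integral_neg_eq_self]
  refine integral_congr_ae (ae_of_all _ fun y => ?_)
  simp only [sub_neg_eq_add, smul_eq_mul]
  rw [ENNReal.toReal_ofReal (Finset.prod_nonneg fun i _ => gaussianPDFReal_nonneg _ _ _), mul_comm]
  congr 1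
  simp only [heatKernel, gaussianPDFReal, Real.coe_toNNReal _ (by positivity : 0 ≤ 2 * s)]
  rw [Finset.prod_mul_distrib, ← Real.exp_sum, Finset.prod_const]
  congr 1
  · rw [Real.sqrt_eq_rpow, ← Real.rpow_neg (by positivity), ← Real.rpow_natCast,
      ← Real.rpow_mul (by positivity)]
    simp only [Finset.card_univ, Fintype.card_fin]
    congr 1 <;> ring
  · congr 1
    rw [neg_div, Finset.sum_div, ← Finset.sum_neg_distrib]
    refine Finset.sum_congr rfl fun i _ => ?_
    simp only [Pi.neg_apply, sub_zero]
    ring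

/-! ### Moment bounds and the dominating function -/

/-- First-order Taylor expansion with quadratic remainder; the constant `C` is not optimal. -/
lemma taylor_two {E : Type*} [NormedAddCommGroup E] [NormedSpace ℝ E] {ψ : E → ℝ}
    (hψ : ContDiff ℝ 2 ψ) {C : ℝ} (hC : ∀ x, ‖iteratedFDeriv ℝ 2 ψ x‖ ≤ C) (x y : E) :
    |ψ (x + y) - ψ x - fderiv ℝ ψ x y| ≤ C * ‖y‖ ^ 2 := by
  have hC0 : 0 ≤ C := (norm_nonneg _).trans (hC x)
  have hd : ContDiff ℝ 1 (fderiv ℝ ψ) := hψ.fderiv_right (by norm_num)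
  have hC' : ∀ z, ‖fderiv ℝ (fderiv ℝ ψ) z‖ ≤ C := fun z => by
    rw [← norm_iteratedFDeriv_one, norm_iteratedFDeriv_fderiv]
    exact hC z
  have hlip : ∀ z, ‖fderiv ℝ ψ z - fderiv ℝ ψ x‖ ≤ C * ‖z - x‖ := fun z =>
    Convex.norm_image_sub_le_of_norm_fderiv_le
      (fun w _ => (hd.differentiable (by norm_num)) w) (fun w _ => hC' w) convex_univ
      (Set.mem_univ x) (Set.mem_univ z)
  have := (convex_closedBall x ‖y‖).norm_image_sub_le_of_norm_hasFDerivWithin_le'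
    (f := ψ) (f' := fderiv ℝ ψ) (C := C * ‖y‖) (x := x) (y := x + y)
    (fun z _ => ((hψ.differentiable (by norm_num)) z).hasFDerivAt.hasFDerivWithinAt)
    (fun z hz => (hlip z).trans (by
      gcongr
      simpa [dist_eq_norm] using hz))
    (by simp) (by simp [dist_eq_norm])
  simp only [add_sub_cancel_left, Real.norm_eq_abs] at this
  linarith

lemma integrable_walk {N : ℕ} {t : ℝ} {g : (Fin N → ℤ) → ℝ} {C : ℝ} (hg : ∀ j, |g j| ≤ C) :
    Integrable g (walk N t) :=
  .of_bound .of_discrete C (ae_of_all _ hg)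

lemma walk_sum_sq (N : ℕ) {t : ℝ} (ht : 0 ≤ t) :
    Integrable (fun j : Fin N → ℤ => ∑ i, (j i : ℝ) ^ 2) (walk N t) ∧
    ∫ j : Fin N → ℤ, ∑ i, (j i : ℝ) ^ 2 ∂(walk N t) = 2 * N * t := by
  refine ⟨integrable_finsetSum _ fun i _ => integrable_coord_sq N t i, ?_⟩
  rw [integral_finsetSum _ fun i _ => integrable_coord_sq N t i]
  simp_rw [integral_coord_sq N ht]
  simp
  ring

/-- The walk is centred, so the first-order term of the Taylor expansion averages out, and the
increment of `ψ` is controlled by the second moment `2 N t` of the walk. -/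
lemma walk_increment_bound {N : ℕ} {ψ : (Fin N → ℝ) → ℝ} (hψ : ContDiff ℝ 2 ψ) {C C₂ : ℝ}
    (hC : ∀ x, |ψ x| ≤ C) (hC₂ : ∀ x, ‖iteratedFDeriv ℝ 2 ψ x‖ ≤ C₂) (h : ℝ) (x : Fin N → ℝ)
    {t : ℝ} (ht : 0 ≤ t) :
    |∫ j, ψ (shift N h x j) ∂(walk N t) - ψ x| ≤ C₂ * h ^ 2 * (2 * N * t) := by
  have hC0 : 0 ≤ C₂ := (norm_nonneg _).trans (hC₂ x)
  -- `L j` is the first-order term of the increment along `h j`.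
  set L : (Fin N → ℤ) → ℝ := fun j => fderiv ℝ ψ x (fun i => h * (j i : ℝ)) with hL
  have hLs : L = fun j => ∑ i, (j i : ℝ) * (h * fderiv ℝ ψ x (Pi.single i 1)) := by
    funext j
    rw [hL]
    simp only
    rw [← ContinuousLinearMap.coe_coe, LinearMap.pi_apply_eq_sum_univ]
    refine Finset.sum_congr rfl fun i _ => ?_
    simp only [smul_eq_mul, ContinuousLinearMap.coe_coe]
    have : (fun k : Fin N => if i = k then (1 : ℝ) else 0) = Pi.single i 1 := by
      ext k; simp [Pi.single_apply, eq_comm]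
    rw [this]; ring
  have hLi : Integrable L (walk N t) := by
    rw [hLs]
    exact integrable_finsetSum _ fun i _ => (integrable_coord N t i).mul_const _
  have hL0 : ∫ j, L j ∂(walk N t) = 0 := by
    rw [hLs, integral_finsetSum _ fun i _ => (integrable_coord N t i).mul_const _]
    simp [integral_mul_const, integral_coord]
  have hψi : Integrable (fun j => ψ (shift N h x j)) (walk N t) := integrable_walk fun j => hC _
  have e : ∫ j, ψ (shift N h x j) ∂(walk N t) - ψ x =
      ∫ j, (ψ (shift N h x j) - ψ x - L j) ∂(walk N t) := by
    have i1 : Integrable (fun j => ψ (shift N h x j) - ψ x) (walk N t) :=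
      hψi.sub (integrable_const _)
    rw [integral_sub i1 hLi, integral_sub hψi (integrable_const _), hL0]
    simp
  rw [e, ← (walk_sum_sq N ht).2, ← integral_const_mul, ← Real.norm_eq_abs]
  refine norm_integral_le_of_norm_le ((walk_sum_sq N ht).1.const_mul _) (ae_of_all _ fun j => ?_)
  rw [Real.norm_eq_abs]
  refine (taylor_two hψ hC₂ x (fun i => h * (j i : ℝ))).trans ?_
  rw [mul_assoc]
  refine mul_le_mul_of_nonneg_left ?_ hC0
  -- The norm on `Fin N → ℝ` is the sup norm, which is dominated by the Euclidean one.
  have hn : ‖fun i => h * (j i : ℝ)‖ ≤ Real.sqrt (h ^ 2 * ∑ i, (j i : ℝ) ^ 2) := by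
    refine (pi_norm_le_iff_of_nonneg (Real.sqrt_nonneg _)).2 fun i => Real.le_sqrt_of_sq_le ?_
    rw [Real.norm_eq_abs, sq_abs, mul_pow]
    exact mul_le_mul_of_nonneg_left (Finset.single_le_sum (f := fun i => (j i : ℝ) ^ 2)
      (fun i _ => sq_nonneg _) (Finset.mem_univ i)) (sq_nonneg _)
  calc _ ≤ Real.sqrt (h ^ 2 * ∑ i, (j i : ℝ) ^ 2) ^ 2 := by gcongr
    _ = _ := Real.sq_sqrt (by positivity)

/-- Markov's inequality for `∑ i, (j i)²`, which is at least `1` off the origin. -/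
lemma walk_compl_zero_le (N : ℕ) {t : ℝ} (ht : 0 ≤ t) :
    (walk N t) {j | j ≠ 0} ≤ ENNReal.ofReal (min 1 (2 * N * t)) := by
  rw [← ofReal_measureReal]
  refine ENNReal.ofReal_le_ofReal (le_min measureReal_le_one ?_)
  rw [← (walk_sum_sq N ht).2, ← integral_indicator_one .of_discrete]
  refine integral_mono (((integrable_const (1 : ℝ)).indicator .of_discrete)) (walk_sum_sq N ht).1
    fun j => ?_
  by_cases hj : j = 0
  · simp [hj]
  · obtain ⟨i, hi⟩ := Function.ne_iff.1 hj
    have h1 : (1 : ℝ) ≤ (j i : ℝ) ^ 2 := by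
      have : 1 ≤ (j i) ^ 2 := by
        have : 0 < (j i) ^ 2 := by have : j i ≠ 0 := hi; positivity
        omega
      exact_mod_cast this
    rw [Set.indicator_of_mem (show j ∈ {j : Fin N → ℤ | j ≠ 0} from hj)]
    exact h1.trans (Finset.single_le_sum (f := fun i => (j i : ℝ) ^ 2)
      (fun i _ => sq_nonneg _) (Finset.mem_univ i))

/-- The dominating function: linear growth in `t` compensates the singularity of
`t ^ (-1 - σ / 2)` at `0` because `σ < 2`, and boundedness suffices at infinity because `0 < σ`. -/
lemma integrableOn_min_mul_rpow {σ : ℝ} (hσ : σ ∈ Set.Ioo (0 : ℝ) 2) {A B : ℝ} (hA : 0 ≤ A)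
    (hB : 0 ≤ B) :
    IntegrableOn (fun t : ℝ => min A (B * t) * t ^ (-1 - σ / 2)) (Set.Ioi 0) := by
  obtain ⟨h0, h2⟩ := hσ
  rw [← Set.Ioc_union_Ioi_eq_Ioi (zero_le_one (α := ℝ))]
  have hmeas : Measurable fun t : ℝ => min A (B * t) * t ^ (-1 - σ / 2) := by fun_prop
  refine IntegrableOn.union ?_ ?_
  · have : IntegrableOn (fun t : ℝ => B * t ^ (-σ / 2)) (Set.Ioc 0 1) := by
      rw [← intervalIntegrable_iff_integrableOn_Ioc_of_le zero_le_one]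
      exact (intervalIntegral.intervalIntegrable_rpow' (by linarith)).const_mul B
    refine Integrable.mono' this hmeas.aestronglyMeasurable
      ((ae_restrict_iff' measurableSet_Ioc).2 (ae_of_all _ fun t ht => ?_))
    have ht0 : 0 < t := ht.1
    rw [Real.norm_of_nonneg (mul_nonneg (le_min hA (by positivity)) (by positivity)),
      show -σ / 2 = 1 + (-1 - σ / 2) by ring, Real.rpow_add ht0, Real.rpow_one, ← mul_assoc]
    exact mul_le_mul_of_nonneg_right (min_le_right _ _) (by positivity)
  · refine Integrable.mono' ((integrableOn_Ioi_rpow_of_lt (by linarith : -1 - σ / 2 < -1)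
      one_pos).const_mul A) hmeas.aestronglyMeasurable
      ((ae_restrict_iff' measurableSet_Ioi).2 (ae_of_all _ fun t ht => ?_))
    have ht0 : 0 < t := one_pos.trans ht
    rw [Real.norm_of_nonneg (mul_nonneg (le_min hA (by positivity)) (by positivity))]
    exact mul_le_mul_of_nonneg_right (min_le_left _ _) (by positivity)

/-! ### Convergence of the nonlocal term -/

lemma integral_walk_eq_tsum {N : ℕ} {t : ℝ} (ht : 0 ≤ t) {g : (Fin N → ℤ) → ℝ} {C : ℝ}
    (hg : ∀ j, |g j| ≤ C) : ∫ j, g j ∂(walk N t) = ∑' j, G N j t * g j := by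
  rw [integral_countable (integrable_walk hg)]
  simp_rw [walk_real_singleton N _ ht, smul_eq_mul]

/-- Expectations along the walk are measurable in time, being countable sums of multiples of `G`. -/
lemma aestronglyMeasurable_integral_walk {N : ℕ} {g : (Fin N → ℤ) → ℝ} {C : ℝ}
    (hg : ∀ j, |g j| ≤ C) (b : ℝ) (hb : 0 < b) :
    AEStronglyMeasurable (fun s => ∫ j, g j ∂(walk N (s / b))) (volume.restrict (Set.Ioi 0)) := by
  have : Measurable fun s : ℝ => ∑' j, G N j (s / b) * g j :=
    Measurable.tsum fun j => ((measurable_G N j).comp (measurable_id.div_const b)).mul_const _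
  refine this.aestronglyMeasurable.congr
    ((ae_restrict_iff' measurableSet_Ioi).2 (ae_of_all _ fun s hs => ?_))
  exact (integral_walk_eq_tsum (div_pos hs hb).le hg).symm

/-- The unscaled weights are summable off the origin, since the walk is off the origin at time
`t` with probability at most `min 1 (2 N t)`. -/
lemma tsum_lintegral_G_ne_top (N : ℕ) {σ : ℝ} (hσ : σ ∈ Set.Ioo (0 : ℝ) 2) :
    ∑' j : {j : Fin N → ℤ // j ≠ 0},
      ∫⁻ t in Set.Ioi (0 : ℝ), ENNReal.ofReal (G N j.1 t * t ^ (-1 - σ / 2)) ≠ ⊤ := by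
  rw [← lintegral_tsum fun j => by
    have := measurable_G N j.1
    fun_prop]
  have hi := integrableOn_min_mul_rpow hσ zero_le_one (B := 2 * N) (by positivity)
  refine ne_top_of_le_ne_top hi.lintegral_lt_top.ne ?_
  refine setLIntegral_mono' measurableSet_Ioi fun t (ht : 0 < t) => ?_
  have e : ∀ j : {j : Fin N → ℤ // j ≠ 0}, ENNReal.ofReal (G N j.1 t * t ^ (-1 - σ / 2)) =
      walk N t {j.1} * ENNReal.ofReal (t ^ (-1 - σ / 2)) := fun j => by
    rw [ENNReal.ofReal_mul (G_nonneg N _ ht.le), ← walk_real_singleton N _ ht.le,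
      ofReal_measureReal]
  simp_rw [e]
  rw [ENNReal.tsum_mul_right, ENNReal.ofReal_mul (le_min zero_le_one (by positivity))]
  gcongr
  refine le_trans (le_of_eq ?_) (walk_compl_zero_le N ht.le)
  have := tsum_measure_preimage_singleton (μ := walk N t) (f := id)
    (Set.to_countable {j : Fin N → ℤ | j ≠ 0}) (fun _ _ => .of_discrete)
  rw [Set.preimage_id] at this
  exact this

lemma shift_zero (N : ℕ) (h : ℝ) (x : Fin N → ℝ) : shift N h x 0 = x := by
  funext i; simp [shift]

/-- Subordination formula for the discrete operator: the weighted sum over the grid is the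
fractional Laplacian formula with the heat semigroup replaced by the semigroup of the walk of
step `h` run at speed `h ^ (-2)`. -/
lemma nonlocal_sum_eq {N : ℕ} {σ : ℝ} (hσ : σ ∈ Set.Ioo (0 : ℝ) 2) {ψ : (Fin N → ℝ) → ℝ} {C : ℝ}
    (hC : ∀ x, |ψ x| ≤ C) {h : ℝ} (hh : 0 < h) (x : Fin N → ℝ) :
    ∑' j : {j : Fin N → ℤ // j ≠ 0}, (ψ (shift N h x j.1) - ψ x) * kappa N σ h j.1 =
      |Real.Gamma (-σ / 2)|⁻¹ * ∫ s in Set.Ioi (0 : ℝ),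
        (∫ j, ψ (shift N h x j) ∂(walk N (s / h ^ 2)) - ψ x) * s ^ (-1 - σ / 2) := by
  have hC0 : 0 ≤ C := (abs_nonneg _).trans (hC x)
  set p : ℝ := -1 - σ / 2 with hp
  set d : (Fin N → ℤ) → ℝ := fun j => ψ (shift N h x j) - ψ x with hd
  have hd2 : ∀ j, |d j| ≤ 2 * C := fun j => by
    have := abs_sub (ψ (shift N h x j)) (ψ x)
    linarith [hC x, hC (shift N h x j)]
  have hdE : ∀ t, ∫ j, ψ (shift N h x j) ∂(walk N t) - ψ x = ∫ j, d j ∂(walk N t) := fun t => by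
    rw [hd, integral_sub (integrable_walk fun j => hC _) (integrable_const _)]
    simp
  -- Fubini: the sum over the grid is taken inside the time integral.
  have hsw : ∑' j : {j : Fin N → ℤ // j ≠ 0}, ∫ t in Set.Ioi (0 : ℝ), d j.1 * (G N j.1 t * t ^ p) =
      ∫ t in Set.Ioi (0 : ℝ), (∫ j, d j ∂(walk N t)) * t ^ p := by
    rw [← integral_tsum]
    · refine setIntegral_congr_fun measurableSet_Ioi fun t (ht : 0 < t) => ?_
      rw [integral_walk_eq_tsum ht.le hd2, ← tsum_mul_right]
      -- The term `j = 0` vanishes because the increment of `ψ` does, so the sum may run over all `j`.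
      refine (tsum_subtype_eq_of_support_subset (s := {j : Fin N → ℤ | j ≠ 0})
        (f := fun j => d j * (G N j t * t ^ p)) fun j hj hj0 => hj ?_).trans
        (tsum_congr fun j => by ring)
      simp [hj0, hd, shift_zero]
    · intro j
      have := measurable_G N j.1
      exact Measurable.aestronglyMeasurable (by fun_prop)
    · have hb : ∀ j : {j : Fin N → ℤ // j ≠ 0},
          ∫⁻ t in Set.Ioi (0 : ℝ), ‖d j.1 * (G N j.1 t * t ^ p)‖ₑ ≤
          ENNReal.ofReal (2 * C) *
            ∫⁻ t in Set.Ioi (0 : ℝ), ENNReal.ofReal (G N j.1 t * t ^ p) := fun j => by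
        rw [← lintegral_const_mul' _ _ ENNReal.ofReal_ne_top]
        refine setLIntegral_mono' measurableSet_Ioi fun t (ht : 0 < t) => ?_
        have h0 : 0 ≤ G N j.1 t * t ^ p := mul_nonneg (G_nonneg N _ ht.le) (by positivity)
        rw [← ENNReal.ofReal_mul (by positivity), ← ofReal_norm, norm_mul,
          Real.norm_of_nonneg h0]
        exact ENNReal.ofReal_le_ofReal (mul_le_mul_of_nonneg_right (hd2 _) h0)
      refine ne_top_of_le_ne_top ?_ (ENNReal.tsum_le_tsum hb)
      rw [ENNReal.tsum_mul_left]
      exact ENNReal.mul_ne_top ENNReal.ofReal_ne_top (tsum_lintegral_G_ne_top N hσ)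
  -- The substitution `s = h ^ 2 * t` absorbs the prefactor `h ^ (-σ)`.
  have hsc : ∫ s in Set.Ioi (0 : ℝ), (∫ j, d j ∂(walk N (s / h ^ 2))) * s ^ p =
      h ^ (-σ) * ∫ t in Set.Ioi (0 : ℝ), (∫ j, d j ∂(walk N t)) * t ^ p := by
    have := integral_comp_mul_left_Ioi
      (fun s => (∫ j, d j ∂(walk N (s / h ^ 2))) * s ^ p) 0 (b := h ^ 2) (by positivity)
    rw [mul_zero, smul_eq_mul, eq_inv_mul_iff_mul_eq₀ (by positivity)] at this
    rw [← this, ← integral_const_mul, ← integral_const_mul]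
    refine setIntegral_congr_fun measurableSet_Ioi fun t (ht : 0 < t) => ?_
    rw [mul_div_cancel_left₀ _ (by positivity : h ^ 2 ≠ 0),
      Real.mul_rpow (by positivity) ht.le]
    have : h ^ (-σ) = h ^ 2 * (h ^ 2) ^ p := by
      rw [← Real.rpow_natCast h 2, ← Real.rpow_mul hh.le, ← Real.rpow_add hh]
      congr 1
      push_cast
      rw [hp]; ring
    rw [this]; ring
  simp_rw [hdE]
  rw [hsc, ← hsw, ← tsum_mul_left, ← tsum_mul_left]
  refine tsum_congr fun j => ?_
  rw [integral_const_mul, kappa]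
  ring

/-- Consistency of the discrete fractional Laplacian, along moving base points: dominated
convergence in the subordination formula. -/
lemma tendsto_nonlocal_sum {N : ℕ} {σ : ℝ} (hσ : σ ∈ Set.Ioo (0 : ℝ) 2)
    {u : (Fin N → ℝ) → ℝ → ℝ} (huc : Continuous fun p : (Fin N → ℝ) × ℝ => u p.1 p.2)
    {C C₂ : ℝ} (hC : ∀ x t, |u x t| ≤ C) (hu : ∀ t, ContDiff ℝ 2 fun x => u x t)
    (hC₂ : ∀ x t, ‖iteratedFDeriv ℝ 2 (fun x => u x t) x‖ ≤ C₂)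
    {hm : ℕ → ℝ} (hhm : ∀ m, 0 < hm m) (hhm0 : Tendsto hm atTop (𝓝 0))
    {xm : ℕ → Fin N → ℝ} {x₀ : Fin N → ℝ} (hxm : Tendsto xm atTop (𝓝 x₀))
    {tm : ℕ → ℝ} {t₀ : ℝ} (htm : Tendsto tm atTop (𝓝 t₀)) :
    Tendsto (fun m => ∑' j : {j : Fin N → ℤ // j ≠ 0},
        (u (shift N (hm m) (xm m) j.1) (tm m) - u (xm m) (tm m)) * kappa N σ (hm m) j.1)
      atTop (𝓝 (fracLap N σ (fun x => u x t₀) x₀)) := by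
  have hC0 : 0 ≤ C := (abs_nonneg _).trans (hC x₀ t₀)
  have hC₂0 : 0 ≤ C₂ := (norm_nonneg _).trans (hC₂ x₀ t₀)
  have e : ∀ m, ∑' j : {j : Fin N → ℤ // j ≠ 0},
      (u (shift N (hm m) (xm m) j.1) (tm m) - u (xm m) (tm m)) * kappa N σ (hm m) j.1 = _ :=
    fun m => nonlocal_sum_eq hσ (ψ := fun x => u x (tm m)) (fun x => hC x _) (hhm m) (xm m)
  simp_rw [e]
  refine Tendsto.const_mul _ (tendsto_integral_of_dominated_convergence _ (fun m => ?_)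
    (integrableOn_min_mul_rpow hσ (A := 2 * C) (B := 2 * N * C₂) (by positivity) (by positivity))
    (fun m => ?_) ?_)
  · have h1 := aestronglyMeasurable_integral_walk (g := fun j => u (shift N (hm m) (xm m) j) (tm m))
      (fun j => hC _ _) (hm m ^ 2) (pow_pos (hhm m) 2)
    exact (h1.sub aestronglyMeasurable_const).mul
      (Measurable.aestronglyMeasurable (by fun_prop))
  · refine (ae_restrict_iff' measurableSet_Ioi).2 (ae_of_all _ fun s (hs : 0 < s) => ?_)
    have h2 : 0 < hm m ^ 2 := pow_pos (hhm m) 2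
    rw [norm_mul, Real.norm_of_nonneg (Real.rpow_nonneg hs.le _), Real.norm_eq_abs]
    refine mul_le_mul_of_nonneg_right (le_min ?_ ?_) (Real.rpow_nonneg hs.le _)
    · have h3 : |∫ j, u (shift N (hm m) (xm m) j) (tm m) ∂(walk N (s / hm m ^ 2))| ≤ C := by
        have := norm_integral_le_of_norm_le_const (μ := walk N (s / hm m ^ 2)) (C := C)
          (f := fun j => u (shift N (hm m) (xm m) j) (tm m)) (ae_of_all _ fun j => hC _ _)
        simpa using this
      have := abs_sub (∫ j, u (shift N (hm m) (xm m) j) (tm m) ∂(walk N (s / hm m ^ 2)))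
        (u (xm m) (tm m))
      linarith [hC (xm m) (tm m)]
    · refine (walk_increment_bound (hu (tm m)) (fun x => hC x _) (fun x => hC₂ x _) (hm m) (xm m)
        (div_pos hs h2).le).trans (le_of_eq ?_)
      have h4 := (hhm m).ne'
      field_simp
  · refine (ae_restrict_iff' measurableSet_Ioi).2 (ae_of_all _ fun s (hs : 0 < s) => ?_)
    rw [heatSG_eq _ hs]
    refine Tendsto.mul_const _ (Tendsto.sub ?_ ?_)
    · exact tendsto_integral_walk huc (fun p => hC _ _) hhm hhm0 hxm htm hs
    · exact (huc.tendsto (x₀, t₀)).comp (hxm.prodMk_nhds htm)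

/-! ### The time derivative and the nonlinearity -/

/-- The backward difference quotient is a value of the time derivative at an intermediate time. -/
lemma tendsto_time_quotient {E : Type*} [TopologicalSpace E] {u ut : E → ℝ → ℝ}
    (hu : ∀ x t, HasDerivAt (u x) (ut x t) t) (hut : Continuous fun p : E × ℝ => ut p.1 p.2)
    {xm : ℕ → E} {x₀ : E} (hxm : Tendsto xm atTop (𝓝 x₀))
    {tm : ℕ → ℝ} {t₀ : ℝ} (htm : Tendsto tm atTop (𝓝 t₀))
    {k : ℕ → ℝ} (hk : ∀ m, 0 < k m) (hk0 : Tendsto k atTop (𝓝 0)) :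
    Tendsto (fun m => (u (xm m) (tm m) - u (xm m) (tm m - k m)) / k m) atTop (𝓝 (ut x₀ t₀)) := by
  have : ∀ m, ∃ c ∈ Set.Ioo (tm m - k m) (tm m),
      ut (xm m) c = (u (xm m) (tm m) - u (xm m) (tm m - k m)) / k m := fun m => by
    obtain ⟨c, hc, h⟩ := exists_hasDerivAt_eq_slope (u (xm m)) (ut (xm m))
      (sub_lt_self (tm m) (hk m)) (fun t _ => (hu _ t).continuousAt.continuousWithinAt)
      (fun t _ => hu _ t)
    exact ⟨c, hc, by rw [h, sub_sub_cancel]⟩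
  choose c hc hce using this
  simp_rw [← hce]
  have hct : Tendsto c atTop (𝓝 t₀) :=
    tendsto_of_tendsto_of_tendsto_of_le_of_le (by simpa using htm.sub hk0) htm
      (fun m => (hc m).1.le) (fun m => (hc m).2.le)
  exact (hut.tendsto (x₀, t₀)).comp (hxm.prodMk_nhds hct)

lemma continuous_of_oneSided {F : ℝ → ℝ} {L : ℝ} (hL : 0 < L)
    (hF : ∀ l₁ l₂ : ℝ, F l₁ - F l₂ ≤ L * max (l₁ - l₂) 0) : Continuous F := by
  refine (LipschitzWith.of_dist_le_mul (K := ⟨L, hL.le⟩) fun a b => ?_).continuous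
  have key : ∀ a b : ℝ, F a - F b ≤ L * |a - b| := fun a b =>
    (hF a b).trans (mul_le_mul_of_nonneg_left (max_le (le_abs_self _) (abs_nonneg _)) hL.le)
  rw [Real.dist_eq, Real.dist_eq]
  exact abs_sub_le_iff.2 ⟨key a b, abs_sub_comm a b ▸ key b a⟩

end Aux

/-- interior consistency of the scheme: along any sequences `h_m → 0⁺`,
`x_m → x₀`, `t_m → t₀ ∈ (0,T)`, `ξ_m → 0`, the scheme function evaluated at the smooth
test function `φ + ξ_m` (with shift `η(h_m)`) converges to
`∂_tφ(x₀,t₀) − F((-(-Δ)^{σ/2}φ(·,t₀))(x₀)) − f(x₀,t₀)`. -/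
theorem stmt_14 (N : ℕ) (hN : 1 ≤ N) (σ : ℝ) (hσ : σ ∈ Set.Ioo (0 : ℝ) 2)
    (T : ℝ) (hT : 0 < T)
    (F : ℝ → ℝ) (LF : ℝ) (hLF : 0 < LF)
    (hF : ∀ l₁ l₂ : ℝ, F l₁ - F l₂ ≤ LF * max (l₁ - l₂) 0)
    (f : (Fin N → ℝ) → ℝ → ℝ)
    (hfc : Continuous fun p : (Fin N → ℝ) × ℝ => f p.1 p.2)
    (hfb : ∃ C : ℝ, ∀ x t, |f x t| ≤ C)
    (φ φt : (Fin N → ℝ) → ℝ → ℝ)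
    (hφc : Continuous fun p : (Fin N → ℝ) × ℝ => φ p.1 p.2)
    (hφb : ∃ C : ℝ, ∀ x t, |φ x t| ≤ C)
    (hφx : ∀ t : ℝ, ContDiff ℝ 2 fun x => φ x t)
    (hφb1 : ∃ C : ℝ, ∀ x t, ‖fderiv ℝ (fun x => φ x t) x‖ ≤ C)
    (hφb2 : ∃ C : ℝ, ∀ x t, ‖iteratedFDeriv ℝ 2 (fun x => φ x t) x‖ ≤ C)
    (hφt : ∀ x t, HasDerivAt (φ x) (φt x t) t)
    (hφtc : Continuous fun p : (Fin N → ℝ) × ℝ => φt p.1 p.2)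
    (τ : ℝ → ℝ) (hτpos : ∀ h : ℝ, 0 < h → 0 < τ h)
    (hτ0 : Tendsto τ (nhdsWithin 0 (Set.Ioi 0)) (nhds 0))
    (η : ℝ → ℝ) (hη : ∀ h : ℝ, 0 < h → 0 ≤ η h)
    (hητ : Tendsto (fun h => η h / τ h) (nhdsWithin 0 (Set.Ioi 0)) (nhds 0))
    (x₀ : Fin N → ℝ) (t₀ : ℝ) (ht₀ : t₀ ∈ Set.Ioo 0 T)
    (hm : ℕ → ℝ) (hhm : ∀ m, 0 < hm m) (hhm0 : Tendsto hm atTop (nhds 0))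
    (xm : ℕ → Fin N → ℝ) (hxm : Tendsto xm atTop (nhds x₀))
    (tm : ℕ → ℝ) (htm : Tendsto tm atTop (nhds t₀))
    (ξm : ℕ → ℝ) (hξm : Tendsto ξm atTop (nhds 0)) :
    Tendsto
      (fun m : ℕ =>
        (φ (xm m) (tm m) + ξm m + η (hm m) - (φ (xm m) (tm m - τ (hm m)) + ξm m)) / τ (hm m)
          - F (∑' j : {j : Fin N → ℤ // j ≠ 0},
              ((φ (shift N (hm m) (xm m) j.1) (tm m - τ (hm m)) + ξm m)
                - (φ (xm m) (tm m - τ (hm m)) + ξm m)) * kappa N σ (hm m) j.1)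
          - f (xm m) (tm m - τ (hm m)))
      atTop
      (nhds (φt x₀ t₀ - F (fracLap N σ (fun x => φ x t₀) x₀) - f x₀ t₀)) := by
  have hh : Tendsto hm atTop (nhdsWithin 0 (Set.Ioi 0)) :=
    tendsto_nhdsWithin_iff.2 ⟨hhm0, Eventually.of_forall hhm⟩
  have hτm : Tendsto (fun m => τ (hm m)) atTop (nhds 0) := hτ0.comp hh
  have hsm : Tendsto (fun m => tm m - τ (hm m)) atTop (nhds t₀) := by
    simpa using htm.sub hτm
  obtain ⟨C, hC⟩ := hφb
  obtain ⟨C₂, hC₂⟩ := hφb2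
  refine Tendsto.sub (Tendsto.sub ?_ ?_) ?_
  · have h1 := tendsto_time_quotient hφt hφtc hxm htm (fun m => hτpos _ (hhm m)) hτm
    have h2 := h1.add (hητ.comp hh)
    rw [add_zero] at h2
    refine h2.congr fun m => ?_
    simp only [Function.comp_apply]
    rw [← add_div]
    congr 1
    ring
  -- The shift `ξ_m` cancels in every increment.
  · simp_rw [add_sub_add_right_eq_sub]
    exact ((continuous_of_oneSided hLF hF).tendsto _).comp
      (tendsto_nonlocal_sum hσ hφc hC hφx hC₂ hhm hhm0 hxm hsm)
  · exact (hfc.tendsto (x₀, t₀)).comp (hxm.prodMk_nhds hsm)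
end

section
/- (Comparison principle for the θ-scheme.) Let N ≥ 1, let (κ_j)_{j∈ℤ^N\{0}} be nonnegative summable weights with total mass S_κ, let F satisfy assumption (A1) with constant L_F > 0, let θ ∈ [0,1], and let τ > 0 satisfy the CFL condition (1−θ)·τ·L_F·S_κ ≤ 1. Let f : ℤ^N × ℕ → ℝ, and suppose (U^n)_{n≥0} and (V^n)_{n≥0} are families of bounded grid functions ℤ^N → ℝ satisfying, for all i and n, U^{n+1}_i ≤ U^n_i + τ·[ F( (1−θ)(L U^n)_i + θ(L U^{n+1})_i ) + f^n_i ] and V^{n+1}_i ≥ V^n_i + τ·[ F( (1−θ)(L V^n)_i + θ(L V^{n+1})_i ) + f^n_i ]. If U^0_i ≤ V^0_i for all i ∈ ℤ^N, then U^n_i ≤ V^n_i for all n ≥ 0 and all i ∈ ℤ^N. -/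
/-!
Set `W n = U n - V n`. Subtracting the two inequalities and applying the one-sided Lipschitz bound
on `F` gives
`W (n+1) i ≤ W n i + τ L_F ((1-θ) (L (W n)) i + θ (L (W (n+1))) i)⁺`.
Suppose `W n ≤ 0`. Since `L W i ≤ S_κ (M - W i)` whenever `W ≤ M` (`Lop_le`), taking `M = 0` and using
the CFL condition shows that the explicit part is nonpositive. The implicit part then yields, with
`a = τ L_F θ S_κ` and `M = sup W (n+1)`, that `W (n+1) i ≤ a (M - W (n+1) i)` wherever the positive
part is active, and `W (n+1) i ≤ 0` elsewhere. If `M > 0`, both cases give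
`W (n+1) i ≤ a M / (1 + a)` for every `i`, so `M ≤ a M / (1 + a) < M`, a contradiction. The
supremum need not be attained.
-/

open MeasureTheory Real Set

/-- The nonlocal operator `(L V)_i = ∑_{j≠0} (V_{i+j} − V_i) κ_j` on grid functions. -/
noncomputable def Lop (N : ℕ) (κ : (Fin N → ℤ) → ℝ) (V : (Fin N → ℤ) → ℝ)
    (i : Fin N → ℤ) : ℝ :=
  ∑' j : {j : Fin N → ℤ // j ≠ 0}, (V (i + j.1) - V i) * κ j.1

lemma summable_Lop {N : ℕ} {κ : (Fin N → ℤ) → ℝ} (hκ : ∀ j, 0 ≤ κ j)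
    (hsum : Summable fun j : {j : Fin N → ℤ // j ≠ 0} => κ j.1)
    {W : (Fin N → ℤ) → ℝ} (hW : ∃ C : ℝ, ∀ i, |W i| ≤ C) (i : Fin N → ℤ) :
    Summable fun j : {j : Fin N → ℤ // j ≠ 0} => (W (i + j.1) - W i) * κ j.1 := by
  obtain ⟨C, hC⟩ := hW
  refine Summable.of_norm_bounded (hsum.mul_left (C + C)) fun j => ?_
  rw [Real.norm_eq_abs, abs_mul, abs_of_nonneg (hκ j.1)]
  exact mul_le_mul_of_nonneg_right
    ((abs_sub _ _).trans (add_le_add (hC _) (hC _))) (hκ j.1)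

lemma Lop_sub {N : ℕ} {κ : (Fin N → ℤ) → ℝ} (hκ : ∀ j, 0 ≤ κ j)
    (hsum : Summable fun j : {j : Fin N → ℤ // j ≠ 0} => κ j.1)
    {U V : (Fin N → ℤ) → ℝ} (hU : ∃ C : ℝ, ∀ i, |U i| ≤ C) (hV : ∃ C : ℝ, ∀ i, |V i| ≤ C)
    (i : Fin N → ℤ) :
    Lop N κ (fun i => U i - V i) i = Lop N κ U i - Lop N κ V i := by
  unfold Lop
  rw [← (summable_Lop hκ hsum hU i).tsum_sub (summable_Lop hκ hsum hV i)]
  exact tsum_congr fun j => by ring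

lemma Lop_le {N : ℕ} {κ : (Fin N → ℤ) → ℝ} (hκ : ∀ j, 0 ≤ κ j)
    (hsum : Summable fun j : {j : Fin N → ℤ // j ≠ 0} => κ j.1)
    {W : (Fin N → ℤ) → ℝ} (hW : ∃ C : ℝ, ∀ i, |W i| ≤ C) {M : ℝ} (hM : ∀ i, W i ≤ M)
    (i : Fin N → ℤ) :
    Lop N κ W i ≤ (M - W i) * ∑' j : {j : Fin N → ℤ // j ≠ 0}, κ j.1 := by
  rw [← tsum_mul_left]
  exact (summable_Lop hκ hsum hW i).tsum_le_tsum
    (fun j => mul_le_mul_of_nonneg_right (sub_le_sub_right (hM _) _) (hκ j.1))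
    (hsum.mul_left _)

/-- comparison principle for the θ-scheme: under assumption (A1) and the
CFL condition `(1−θ) τ L_F S_κ ≤ 1`, bounded sub- and supersolutions of the θ-scheme are
ordered whenever their initial data are. -/
theorem stmt_16 (N : ℕ) (hN : 1 ≤ N)
    (κ : (Fin N → ℤ) → ℝ) (hκ : ∀ j, 0 ≤ κ j)
    (hsum : Summable fun j : {j : Fin N → ℤ // j ≠ 0} => κ j.1)
    (F : ℝ → ℝ) (LF : ℝ) (hLF : 0 < LF)
    (hF : ∀ l₁ l₂ : ℝ, F l₁ - F l₂ ≤ LF * max (l₁ - l₂) 0)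
    (θ : ℝ) (hθ : θ ∈ Set.Icc (0 : ℝ) 1) (τ : ℝ) (hτ : 0 < τ)
    (hCFL : (1 - θ) * τ * LF * (∑' j : {j : Fin N → ℤ // j ≠ 0}, κ j.1) ≤ 1)
    (f : (Fin N → ℤ) → ℕ → ℝ)
    (U V : ℕ → (Fin N → ℤ) → ℝ)
    (hUb : ∀ n, ∃ C : ℝ, ∀ i, |U n i| ≤ C)
    (hVb : ∀ n, ∃ C : ℝ, ∀ i, |V n i| ≤ C)
    (hU : ∀ n i, U (n + 1) i ≤ U n i
      + τ * (F ((1 - θ) * Lop N κ (U n) i + θ * Lop N κ (U (n + 1)) i) + f i n))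
    (hV : ∀ n i, V n i
      + τ * (F ((1 - θ) * Lop N κ (V n) i + θ * Lop N κ (V (n + 1)) i) + f i n)
        ≤ V (n + 1) i)
    (h0 : ∀ i, U 0 i ≤ V 0 i) :
    ∀ n i, U n i ≤ V n i := by
  have hWb : ∀ n, ∃ C : ℝ, ∀ i, |U n i - V n i| ≤ C := fun n => by
    obtain ⟨C, hC⟩ := hUb n
    obtain ⟨D, hD⟩ := hVb n
    exact ⟨C + D, fun i => (abs_sub _ _).trans (add_le_add (hC i) (hD i))⟩
  intro n
  induction n with
  | zero => exact h0
  | succ n ih =>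
    set S := ∑' j : {j : Fin N → ℤ // j ≠ 0}, κ j.1 with hS
    have hS0 : 0 ≤ S := tsum_nonneg fun j => hκ j.1
    set W : (Fin N → ℤ) → ℝ := fun i => U (n + 1) i - V (n + 1) i with hWdef
    have hbdd : BddAbove (Set.range W) := by
      obtain ⟨C, hC⟩ := hWb (n + 1)
      exact ⟨C, by rintro _ ⟨i, rfl⟩; exact (le_abs_self _).trans (hC i)⟩
    set M := ⨆ i, W i with hMdef
    have hWM : ∀ i, W i ≤ M := fun i => le_ciSup hbdd i
    by_contra! hcon
    obtain ⟨i₀, hi₀⟩ := hcon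
    have hMpos : 0 < M := lt_of_lt_of_le (sub_pos.2 hi₀) (hWM i₀)
    have ha : 0 ≤ τ * LF * θ * S := by have := hθ.1; positivity
    have key : ∀ i, W i ≤ τ * LF * θ * S * M / (1 + τ * LF * θ * S) := by
      intro i
      rw [le_div_iff₀ (by linarith)]
      have hF' := mul_le_mul_of_nonneg_left
        (hF ((1 - θ) * Lop N κ (U n) i + θ * Lop N κ (U (n + 1)) i)
          ((1 - θ) * Lop N κ (V n) i + θ * Lop N κ (V (n + 1)) i)) hτ.le
      have hstep : W i ≤ (U n i - V n i) + τ * (LF *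
          max ((1 - θ) * Lop N κ (U n) i + θ * Lop N κ (U (n + 1)) i
            - ((1 - θ) * Lop N κ (V n) i + θ * Lop N κ (V (n + 1)) i)) 0) := by
        simp only [hWdef]
        linarith [hU n i, hV n i]
      have haM := mul_nonneg ha hMpos.le
      rcases le_total ((1 - θ) * Lop N κ (U n) i + θ * Lop N κ (U (n + 1)) i
            - ((1 - θ) * Lop N κ (V n) i + θ * Lop N κ (V (n + 1)) i)) 0 with h | h
      · rw [max_eq_right h] at hstep
        have hWi : W i ≤ 0 := by linarith [ih i]
        nlinarith
      · rw [max_eq_left h] at hstep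
        have hexp := Lop_le hκ hsum (hWb n) (M := 0) (fun i => sub_nonpos.2 (ih i)) i
        have himp := Lop_le hκ hsum (hWb (n + 1)) hWM i
        rw [Lop_sub hκ hsum (hUb n) (hVb n), ← hS] at hexp
        rw [Lop_sub hκ hsum (hUb (n + 1)) (hVb (n + 1)), ← hS] at himp
        have e1 := mul_le_mul_of_nonneg_left hexp
          (mul_nonneg (mul_nonneg hτ.le hLF.le) (sub_nonneg.2 hθ.2))
        have e2 := mul_le_mul_of_nonneg_left himp
          (mul_nonneg (mul_nonneg hτ.le hLF.le) hθ.1)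
        -- The CFL condition makes the coefficient of `U n i - V n i ≤ 0` nonnegative.
        have e3 := mul_nonneg (sub_nonneg.2 hCFL) (sub_nonneg.2 (ih i))
        simp only [hWdef] at hstep ⊢
        linarith
    have hle : M ≤ τ * LF * θ * S * M / (1 + τ * LF * θ * S) := ciSup_le key
    rw [le_div_iff₀ (by linarith)] at hle
    linarith
end
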